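/- Let μ ∈ (0, π/2), c = cos(μ), s = sin(μ), α = c/s, and ε ≥ 0. Let H_A, H_B be finite-dimensional complex Hilbert spaces, M₁, M₂ self-adjoint operators on H_A with M₁² = M₂² = 1, N₁, N₂ self-adjoint operators on H_B with N₁² = N₂² = 1, and ψ ∈ H_A ⊗ H_B a unit vector with ⟨ψ, (α M₁⊗N₁ + α M₁⊗N₂ + M₂⊗N₁ − M₂⊗N₂)ψ⟩ ≥ 2√(1+α²) − ε. Set Z_A = M₁⊗1, X_A = M₂⊗1, Z_B = (1⊗(N₁+N₂))/(2c), X_B = (1⊗(N₁−N₂))/(2s). Then: ‖(Z_A − Z_B)ψ‖ ≤ (√s/c)√ε; ‖(X_A − X_B)ψ‖ ≤ √ε/√s; ‖(Z_A X_B + X_A Z_B)ψ‖ ≤ √ε/(c√s); ‖(X_A(1 + Z_B) − X_B(1 − Z_A))ψ‖ ≤ ((c+1)/(c√s))√ε; ‖(Z_A(1 + X_B) − Z_B(1 − X_A))ψ‖ ≤ ((s+1)/(c√s))√ε; ‖(Z_A X_A + X_A Z_A)ψ‖ ≤ ((1+c+s)/(c√s))√ε; and ‖(X_A Z_A + X_B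 Z_B)ψ‖ ≤ ((2s²+cs+c+s)/(cs√s))√ε. -/

import Mathlib

open Matrix Kronecker

/-- The action of a matrix on a vector of the corresponding Euclidean (Hilbert) space. -/
noncomputable def mApply {ι κ : Type*} [Fintype ι] (A : Matrix κ ι ℂ) (v : EuclideanSpace ℂ ι) :
    EuclideanSpace ℂ κ :=
  (WithLp.equiv 2 (κ → ℂ)).symm (A.mulVec (WithLp.equiv 2 (ι → ℂ) v))

/-!
Write `K = c² Z_A Z_B + s² X_A X_B`, so that the weighted CHSH operator is `(2 / s) K`, and
`T = Z_A X_B + X_A Z_B`.  Two sum-of-squares identities hold: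
`c² (Z_A - Z_B)² + s² (X_A - X_B)² = 2 (1 - K)` and `K² + (c s)² T² = 1`, the latter being
equivalent to `(1 - K)² + (c s)² T² = 2 (1 - K)`.  Near-maximal violation says that
`2 ⟨ψ, (1 - K) ψ⟩ ≤ s ε`, so each square on the left has expectation at most `s ε` in `ψ`.  The
other estimates follow from the triangle inequality, since `Z_A`, `X_A` are isometries and
`‖Z_B‖ ≤ 1 / c`.
-/

section Algebra

variable {k R : Type*}

/-- The weighted CHSH operator `α A₀ B₀ + α A₀ B₁ + A₁ B₀ - A₁ B₁`; the usual one is `α = 1`. -/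
def weightedCHSH [Ring R] [SMul k R] (α : k) (A₀ A₁ B₀ B₁ : R) : R :=
  α • (A₀ * B₀) + α • (A₀ * B₁) + A₁ * B₀ - A₁ * B₁

/-- The operator `K = c² Z_A Z_B + s² X_A X_B`: the weighted CHSH operator of weight `c / s`,
normalized so that its maximal value is `1`. -/
def weightedCorrelation [Ring R] [Monoid k] [SMul k R] (c s : k) (ZA XA ZB XB : R) : R :=
  c ^ 2 • (ZA * ZB) + s ^ 2 • (XA * XB)

/-- A weighted CHSH tuple consists of self-adjoint involutions `Z_A`, `X_A` commuting with
anticommuting self-adjoint elements `Z_B`, `X_B`, the latter scaled so that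
`(c Z_B)² + (s X_B)² = 1`, where `c² + s² = 1`.  Equivalently (for invertible `2`, `c`, `s`),
`c Z_B ± s X_B` are self-adjoint involutions commuting with `Z_A`, `X_A`. -/
structure IsWeightedCHSHTuple [CommRing k] [Ring R] [StarRing R] [Algebra k R] (c s : k)
    (ZA XA ZB XB : R) : Prop where
  weight_sq : c ^ 2 + s ^ 2 = 1
  isSelfAdjoint_ZA : IsSelfAdjoint ZA
  isSelfAdjoint_XA : IsSelfAdjoint XA
  isSelfAdjoint_ZB : IsSelfAdjoint ZB
  isSelfAdjoint_XB : IsSelfAdjoint XB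
  ZA_sq : ZA ^ 2 = 1
  XA_sq : XA ^ 2 = 1
  smul_ZB_sq_add_smul_XB_sq : c ^ 2 • ZB ^ 2 + s ^ 2 • XB ^ 2 = 1
  XB_mul_ZB : XB * ZB = -(ZB * XB)
  commute_ZA_ZB : Commute ZA ZB
  commute_ZA_XB : Commute ZA XB
  commute_XA_ZB : Commute XA ZB
  commute_XA_XB : Commute XA XB

section Involutions

variable [Ring R] {a b : R}

theorem sub_mul_add_eq_neg_add_mul_sub_of_sq_eq_one (ha : a ^ 2 = 1) (hb : b ^ 2 = 1) :
    (a - b) * (a + b) = -((a + b) * (a - b)) := by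
  simp only [add_mul, sub_mul, mul_add, mul_sub, ← pow_two, ha, hb]
  abel

theorem add_sq_add_sub_sq_of_sq_eq_one (ha : a ^ 2 = 1) (hb : b ^ 2 = 1) :
    (a + b) ^ 2 + (a - b) ^ 2 = 4 := by
  simp only [pow_two, add_mul, sub_mul, mul_add, mul_sub] at ha hb ⊢
  rw [ha, hb]
  abel_nf
  norm_num

end Involutions

theorem isWeightedCHSHTuple_of_isCHSHTuple [Field k] [NeZero (2 : k)] [StarRing k] [Ring R]
    [StarRing R] [Algebra k R] [StarModule k R] {c s : k} (hc : IsSelfAdjoint c)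
    (hs : IsSelfAdjoint s) (hc₀ : c ≠ 0) (hs₀ : s ≠ 0) (hcs : c ^ 2 + s ^ 2 = 1) {A₀ A₁ B₀ B₁ : R}
    (h : IsCHSHTuple A₀ A₁ B₀ B₁) :
    IsWeightedCHSHTuple c s A₀ A₁ ((2 * c)⁻¹ • (B₀ + B₁)) ((2 * s)⁻¹ • (B₀ - B₁)) where
  weight_sq := hcs
  isSelfAdjoint_ZA := h.A₀_sa
  isSelfAdjoint_XA := h.A₁_sa
  isSelfAdjoint_ZB := ((IsSelfAdjoint.ofNat 2).mul hc).inv₀.smul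
    (IsSelfAdjoint.add h.B₀_sa h.B₁_sa)
  isSelfAdjoint_XB := ((IsSelfAdjoint.ofNat 2).mul hs).inv₀.smul
    (IsSelfAdjoint.sub h.B₀_sa h.B₁_sa)
  ZA_sq := h.A₀_inv
  XA_sq := h.A₁_inv
  smul_ZB_sq_add_smul_XB_sq := by
    have four_ne : (4 : k) ≠ 0 := by
      rw [← two_add_two_eq_four, ← two_mul]
      exact mul_self_ne_zero.2 two_ne_zero
    have hc' : c ^ 2 * (2 * c)⁻¹ ^ 2 = 4⁻¹ := by field_simp; norm_num
    have hs' : s ^ 2 * (2 * s)⁻¹ ^ 2 = 4⁻¹ := by field_simp; norm_num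
    rw [smul_pow, smul_pow, smul_smul, smul_smul, hc', hs', ← smul_add,
      add_sq_add_sub_sq_of_sq_eq_one h.B₀_inv h.B₁_inv, inv_smul_eq_iff₀ four_ne,
      ← Algebra.algebraMap_eq_smul_one, map_ofNat]
  XB_mul_ZB := by
    rw [smul_mul_smul_comm, smul_mul_smul_comm,
      sub_mul_add_eq_neg_add_mul_sub_of_sq_eq_one h.B₀_inv h.B₁_inv, smul_neg, mul_comm (2 * s)⁻¹]
  commute_ZA_ZB := (Commute.add_right h.A₀B₀_commutes h.A₀B₁_commutes).smul_right _
  commute_ZA_XB := (Commute.sub_right h.A₀B₀_commutes h.A₀B₁_commutes).smul_right _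
  commute_XA_ZB := (Commute.add_right h.A₁B₀_commutes h.A₁B₁_commutes).smul_right _
  commute_XA_XB := (Commute.sub_right h.A₁B₀_commutes h.A₁B₁_commutes).smul_right _

theorem weightedCHSH_div_eq_smul_weightedCorrelation [Field k] [NeZero (2 : k)] [Ring R]
    [Algebra k R] {c s : k} (hc : c ≠ 0) (hs : s ≠ 0) (A₀ A₁ B₀ B₁ : R) :
    weightedCHSH (c / s) A₀ A₁ B₀ B₁ =
      (2 / s) • weightedCorrelation c s A₀ A₁ ((2 * c)⁻¹ • (B₀ + B₁)) ((2 * s)⁻¹ • (B₀ - B₁)) := by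
  have hZ : 2 / s * (c ^ 2 * (2 * c)⁻¹) = c / s := by field_simp
  have hX : 2 / s * (s ^ 2 * (2 * s)⁻¹) = 1 := by field_simp
  simp only [weightedCHSH, weightedCorrelation, mul_smul_comm, smul_add, smul_smul, hZ, hX, mul_add,
    mul_sub, one_smul, add_sub_assoc]

namespace IsWeightedCHSHTuple

variable [CommRing k] [Ring R] [StarRing R] [Algebra k R] {c s : k} {ZA XA ZB XB : R}

theorem smul_sub_sq_add_smul_sub_sq (h : IsWeightedCHSHTuple c s ZA XA ZB XB) :
    c ^ 2 • (ZA - ZB) ^ 2 + s ^ 2 • (XA - XB) ^ 2 =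
      (2 : k) • (1 - weightedCorrelation c s ZA XA ZB XB) := by
  have hA : c ^ 2 • (1 : R) + s ^ 2 • (1 : R) = 1 := by rw [← add_smul, h.weight_sq, one_smul]
  rw [h.commute_ZA_ZB.sub_sq, h.commute_XA_XB.sub_sq, h.ZA_sq, h.XA_sq, weightedCorrelation]
  simp only [two_mul, add_mul]
  linear_combination (norm := module) hA + h.smul_ZB_sq_add_smul_XB_sq

theorem weightedCorrelation_sq (h : IsWeightedCHSHTuple c s ZA XA ZB XB) :
    weightedCorrelation c s ZA XA ZB XB ^ 2 = c ^ 4 • ZB ^ 2 + s ^ 4 • XB ^ 2 +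
      (c * s) ^ 2 • ((ZA * XA - XA * ZA) * (ZB * XB)) := by
  simp only [weightedCorrelation, pow_two (_ + _), mul_add, add_mul, smul_mul_assoc, mul_smul_comm,
    h.commute_ZA_ZB.symm.mul_mul_mul_comm, h.commute_XA_ZB.symm.mul_mul_mul_comm,
    h.commute_ZA_XB.symm.mul_mul_mul_comm, h.commute_XA_XB.symm.mul_mul_mul_comm,
    h.XB_mul_ZB, ← pow_two ZA, ← pow_two XA, ← pow_two ZB, ← pow_two XB, h.ZA_sq, h.XA_sq,
    one_mul, mul_neg, sub_mul]
  module

theorem cross_sq (h : IsWeightedCHSHTuple c s ZA XA ZB XB) :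
    (ZA * XB + XA * ZB) ^ 2 =
      ZB ^ 2 + XB ^ 2 - (ZA * XA - XA * ZA) * (ZB * XB) := by
  simp only [pow_two (_ + _), mul_add, add_mul,
    h.commute_ZA_ZB.symm.mul_mul_mul_comm, h.commute_XA_ZB.symm.mul_mul_mul_comm,
    h.commute_ZA_XB.symm.mul_mul_mul_comm, h.commute_XA_XB.symm.mul_mul_mul_comm,
    h.XB_mul_ZB, ← pow_two ZA, ← pow_two XA, ← pow_two ZB, ← pow_two XB, h.ZA_sq, h.XA_sq,
    one_mul, mul_neg, sub_mul]
  abel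

theorem weightedCorrelation_sq_add_smul_cross_sq (h : IsWeightedCHSHTuple c s ZA XA ZB XB) :
    weightedCorrelation c s ZA XA ZB XB ^ 2 + (c * s) ^ 2 • (ZA * XB + XA * ZB) ^ 2 = 1 := by
  have hc : c ^ 4 + (c * s) ^ 2 = c ^ 2 := by linear_combination c ^ 2 * h.weight_sq
  have hs : s ^ 4 + (c * s) ^ 2 = s ^ 2 := by linear_combination s ^ 2 * h.weight_sq
  rw [h.weightedCorrelation_sq, h.cross_sq, ← h.smul_ZB_sq_add_smul_XB_sq, ← hc, ← hs]
  module

theorem one_sub_weightedCorrelation_sq_add_smul_cross_sq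
    (h : IsWeightedCHSHTuple c s ZA XA ZB XB) :
    (1 - weightedCorrelation c s ZA XA ZB XB) ^ 2 + (c * s) ^ 2 • (ZA * XB + XA * ZB) ^ 2 =
      (2 : k) • (1 - weightedCorrelation c s ZA XA ZB XB) := by
  rw [(Commute.one_left _).sub_sq, one_pow, mul_one, two_mul]
  linear_combination (norm := module) h.weightedCorrelation_sq_add_smul_cross_sq

theorem isSelfAdjoint_cross (h : IsWeightedCHSHTuple c s ZA XA ZB XB) :
    IsSelfAdjoint (ZA * XB + XA * ZB) :=
  ((h.isSelfAdjoint_ZA.commute_iff h.isSelfAdjoint_XB).1 h.commute_ZA_XB).add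
    ((h.isSelfAdjoint_XA.commute_iff h.isSelfAdjoint_ZB).1 h.commute_XA_ZB)

theorem isSelfAdjoint_weightedCorrelation [StarRing k] [StarModule k R]
    (h : IsWeightedCHSHTuple c s ZA XA ZB XB) (hc : IsSelfAdjoint c) (hs : IsSelfAdjoint s) :
    IsSelfAdjoint (weightedCorrelation c s ZA XA ZB XB) :=
  ((hc.pow 2).smul ((h.isSelfAdjoint_ZA.commute_iff h.isSelfAdjoint_ZB).1 h.commute_ZA_ZB)).add
    ((hs.pow 2).smul ((h.isSelfAdjoint_XA.commute_iff h.isSelfAdjoint_XB).1 h.commute_XA_XB))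

end IsWeightedCHSHTuple

end Algebra

theorem isCHSHTuple_map {F R S : Type*} [Monoid R] [StarMul R] [Monoid S] [StarMul S]
    [FunLike F R S] [MonoidHomClass F R S] [StarHomClass F R S] (f : F) {A₀ A₁ B₀ B₁ : R}
    (h : IsCHSHTuple A₀ A₁ B₀ B₁) : IsCHSHTuple (f A₀) (f A₁) (f B₀) (f B₁) where
  A₀_inv := by rw [← map_pow, h.A₀_inv, map_one]
  A₁_inv := by rw [← map_pow, h.A₁_inv, map_one]
  B₀_inv := by rw [← map_pow, h.B₀_inv, map_one]
  B₁_inv := by rw [← map_pow, h.B₁_inv, map_one]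
  A₀_sa := by rw [← map_star, h.A₀_sa]
  A₁_sa := by rw [← map_star, h.A₁_sa]
  B₀_sa := by rw [← map_star, h.B₀_sa]
  B₁_sa := by rw [← map_star, h.B₁_sa]
  A₀B₀_commutes := by rw [← map_mul, h.A₀B₀_commutes, map_mul]
  A₀B₁_commutes := by rw [← map_mul, h.A₀B₁_commutes, map_mul]
  A₁B₀_commutes := by rw [← map_mul, h.A₁B₀_commutes, map_mul]
  A₁B₁_commutes := by rw [← map_mul, h.A₁B₁_commutes, map_mul]

theorem map_weightedCHSH {k R S F : Type*} [Ring R] [Ring S] [Monoid k] [DistribMulAction k R]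
    [DistribMulAction k S] [FunLike F R S] [RingHomClass F R S]
    [MulActionSemiHomClass F (@id k) R S] (f : F) (α : k) (A₀ A₁ B₀ B₁ : R) :
    f (weightedCHSH α A₀ A₁ B₀ B₁) = weightedCHSH α (f A₀) (f A₁) (f B₀) (f B₁) := by
  simp only [weightedCHSH, map_add, map_sub, map_smul, map_mul]

theorem sqrt_one_add_div_sq_of_sq_add_sq_eq_one {c s : ℝ} (hs : 0 < s) (hcs : c ^ 2 + s ^ 2 = 1) :
    √(1 + (c / s) ^ 2) = 1 / s := by
  rw [Real.sqrt_eq_iff_eq_sq (by positivity) (by positivity)]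
  field_simp
  linarith

theorem sqrt_mul_eq_mul_sqrt_div_sqrt {s : ℝ} (hs : 0 < s) (ε : ℝ) :
    √(s * ε) = s * (√ε / √s) := by
  rw [Real.sqrt_mul hs.le, mul_div_left_comm, Real.div_sqrt, mul_comm]

section HilbertSpace

variable {𝕜 H : Type*} [RCLike 𝕜] [NormedAddCommGroup H] [InnerProductSpace 𝕜 H]

theorem re_inner_two_smul_one_sub_apply_le {s ε : ℝ} (hs : 0 < s) {K : H →L[𝕜] H} {ψ : H}
    (hK : 2 / s * ‖ψ‖ ^ 2 - ε ≤ RCLike.re (inner 𝕜 ψ (((2 / s : 𝕜) • K) ψ))) :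
    RCLike.re (inner 𝕜 ψ (((2 : 𝕜) • (1 - K)) ψ)) ≤ s * ε := by
  have hK_inner : RCLike.re (inner 𝕜 ψ (((2 / s : 𝕜) • K) ψ)) =
      2 / s * RCLike.re (inner 𝕜 ψ (K ψ)) := by
    rw [_root_.smul_apply, inner_smul_right, ← RCLike.ofReal_ofNat 2, ← RCLike.ofReal_div,
      RCLike.re_ofReal_mul]
  have hdefect : RCLike.re (inner 𝕜 ψ (((2 : 𝕜) • (1 - K)) ψ)) =
      2 * (‖ψ‖ ^ 2 - RCLike.re (inner 𝕜 ψ (K ψ))) := by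
    rw [_root_.smul_apply, inner_smul_right, ← RCLike.ofReal_ofNat 2, RCLike.re_ofReal_mul,
      _root_.sub_apply, one_apply_eq_self, inner_sub_right, map_sub, ← norm_sq_eq_re_inner]
  rw [hK_inner] at hK
  rw [hdefect, ← div_le_iff₀' hs]
  linear_combination hK

theorem re_inner_two_smul_one_sub_weightedCorrelation_le {c s ε : ℝ} (hc : 0 < c) (hs : 0 < s)
    (hcs : c ^ 2 + s ^ 2 = 1) {A₀ A₁ B₀ B₁ : H →L[𝕜] H} {ψ : H}
    (hviol : 2 * √(1 + (c / s) ^ 2) * ‖ψ‖ ^ 2 - ε ≤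
      RCLike.re (inner 𝕜 ψ (weightedCHSH (c / s : 𝕜) A₀ A₁ B₀ B₁ ψ))) :
    RCLike.re (inner 𝕜 ψ (((2 : 𝕜) • (1 - weightedCorrelation (c : 𝕜) (s : 𝕜) A₀ A₁
      ((2 * c : 𝕜)⁻¹ • (B₀ + B₁)) ((2 * s : 𝕜)⁻¹ • (B₀ - B₁)))) ψ)) ≤ s * ε := by
  apply re_inner_two_smul_one_sub_apply_le hs
  rwa [sqrt_one_add_div_sq_of_sq_add_sq_eq_one hs hcs, mul_one_div,
    weightedCHSH_div_eq_smul_weightedCorrelation (RCLike.ofReal_ne_zero.2 hc.ne')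
      (RCLike.ofReal_ne_zero.2 hs.ne')] at hviol

variable [CompleteSpace H]

theorem norm_sq_apply_eq_re_inner_sq_apply {A : H →L[𝕜] H} (hA : IsSelfAdjoint A) (v : H) :
    ‖A v‖ ^ 2 = RCLike.re (inner 𝕜 v ((A ^ 2) v)) := by
  rw [A.apply_norm_sq_eq_inner_adjoint_right, ← ContinuousLinearMap.star_eq_adjoint, hA.star_eq,
    pow_two]
  rfl

theorem norm_apply_eq_of_isSelfAdjoint_of_sq_eq_one {A : H →L[𝕜] H} (hA : IsSelfAdjoint A)
    (hA_sq : A ^ 2 = 1) (v : H) : ‖A v‖ = ‖v‖ := by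
  rw [← sq_eq_sq₀ (norm_nonneg _) (norm_nonneg _), norm_sq_apply_eq_re_inner_sq_apply hA, hA_sq,
    norm_sq_eq_re_inner (𝕜 := 𝕜) v]
  rfl

theorem smul_norm_sq_add_smul_norm_sq {A B C : H →L[𝕜] H} (hA : IsSelfAdjoint A)
    (hB : IsSelfAdjoint B) {a b : ℝ} (h : (a : 𝕜) ^ 2 • A ^ 2 + (b : 𝕜) ^ 2 • B ^ 2 = C) (v : H) :
    (a * ‖A v‖) ^ 2 + (b * ‖B v‖) ^ 2 = RCLike.re (inner 𝕜 v (C v)) := by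
  rw [← h, mul_pow, mul_pow, norm_sq_apply_eq_re_inner_sq_apply hA,
    norm_sq_apply_eq_re_inner_sq_apply hB]
  simp only [_root_.add_apply, _root_.smul_apply, inner_add_right,
    inner_smul_right, map_add, ← RCLike.ofReal_pow, RCLike.re_ofReal_mul]

namespace IsWeightedCHSHTuple

variable {c s : ℝ} {ZA XA ZB XB : H →L[𝕜] H}

theorem norm_ZB_apply_le (h : IsWeightedCHSHTuple (c : 𝕜) (s : 𝕜) ZA XA ZB XB) (hc : 0 < c)
    (v : H) : ‖ZB v‖ ≤ ‖v‖ / c := by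
  have key := smul_norm_sq_add_smul_norm_sq h.isSelfAdjoint_ZB h.isSelfAdjoint_XB
    h.smul_ZB_sq_add_smul_XB_sq v
  rw [one_apply_eq_self, ← norm_sq_eq_re_inner] at key
  rw [le_div_iff₀' hc]
  exact le_of_sq_le_sq (by linarith [sq_nonneg (s * ‖XB v‖)]) (norm_nonneg v)

theorem mul_norm_sub_sq_add_mul_norm_sub_sq
    (h : IsWeightedCHSHTuple (c : 𝕜) (s : 𝕜) ZA XA ZB XB) (ψ : H) :
    (c * ‖(ZA - ZB) ψ‖) ^ 2 + (s * ‖(XA - XB) ψ‖) ^ 2 = RCLike.re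
      (inner 𝕜 ψ (((2 : 𝕜) • (1 - weightedCorrelation (c : 𝕜) (s : 𝕜) ZA XA ZB XB)) ψ)) :=
  smul_norm_sq_add_smul_norm_sq (h.isSelfAdjoint_ZA.sub h.isSelfAdjoint_ZB)
    (h.isSelfAdjoint_XA.sub h.isSelfAdjoint_XB) h.smul_sub_sq_add_smul_sub_sq ψ

section NearMaximalCorrelation

variable {ψ : H} {ε : ℝ} (h : IsWeightedCHSHTuple (c : 𝕜) (s : 𝕜) ZA XA ZB XB) (hc : 0 < c)
  (hs : 0 < s) (hdefect : RCLike.re (inner 𝕜 ψ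
    (((2 : 𝕜) • (1 - weightedCorrelation (c : 𝕜) (s : 𝕜) ZA XA ZB XB)) ψ)) ≤ s * ε)

include h hs hdefect

theorem norm_XA_sub_XB_apply_le : ‖(XA - XB) ψ‖ ≤ √ε / √s := by
  have key : s * ‖(XA - XB) ψ‖ ≤ √(s * ε) := Real.le_sqrt_of_sq_le <| by
    linarith [h.mul_norm_sub_sq_add_mul_norm_sub_sq ψ, sq_nonneg (c * ‖(ZA - ZB) ψ‖)]
  rwa [sqrt_mul_eq_mul_sqrt_div_sqrt hs, mul_le_mul_iff_right₀ hs] at key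

include hc

theorem norm_ZA_sub_ZB_apply_le : ‖(ZA - ZB) ψ‖ ≤ √s / c * √ε := by
  rw [div_mul_eq_mul_div, ← Real.sqrt_mul hs.le, le_div_iff₀' hc]
  apply Real.le_sqrt_of_sq_le
  linarith [h.mul_norm_sub_sq_add_mul_norm_sub_sq ψ, sq_nonneg (s * ‖(XA - XB) ψ‖)]

theorem norm_cross_apply_le : ‖(ZA * XB + XA * ZB) ψ‖ ≤ √ε / (c * √s) := by
  set K := weightedCorrelation (c : 𝕜) (s : 𝕜) ZA XA ZB XB
  have hK : IsSelfAdjoint (1 - K) := (IsSelfAdjoint.one _).sub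
    (h.isSelfAdjoint_weightedCorrelation (RCLike.conj_ofReal c) (RCLike.conj_ofReal s))
  have squares := smul_norm_sq_add_smul_norm_sq (a := 1) (b := c * s) hK h.isSelfAdjoint_cross
    (by simpa using h.one_sub_weightedCorrelation_sq_add_smul_cross_sq) ψ
  have key : c * s * ‖(ZA * XB + XA * ZB) ψ‖ ≤ √(s * ε) := Real.le_sqrt_of_sq_le <| by
    linarith [sq_nonneg (1 * ‖(1 - K) ψ‖)]
  rwa [sqrt_mul_eq_mul_sqrt_div_sqrt hs, mul_comm c, mul_assoc, mul_le_mul_iff_right₀ hs,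
    ← le_div_iff₀' hc, div_div, mul_comm (√s)] at key

theorem norm_XA_mul_one_add_ZB_sub_apply_le :
    ‖(XA * (1 + ZB) - XB * (1 - ZA)) ψ‖ ≤ (c + 1) / (c * √s) * √ε := by
  have split : XA * (1 + ZB) - XB * (1 - ZA) = (XA - XB) + (ZA * XB + XA * ZB) := by
    rw [mul_add, mul_sub, h.commute_ZA_XB.eq, mul_one, mul_one]
    abel
  calc
    _ ≤ √ε / √s + √ε / (c * √s) := split ▸ norm_add_le_of_le
      (h.norm_XA_sub_XB_apply_le hs hdefect) (h.norm_cross_apply_le hc hs hdefect)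
    _ = _ := by field_simp

theorem norm_ZA_mul_one_add_XB_sub_apply_le :
    ‖(ZA * (1 + XB) - ZB * (1 - XA)) ψ‖ ≤ (s + 1) / (c * √s) * √ε := by
  have split : ZA * (1 + XB) - ZB * (1 - XA) = (ZA - ZB) + (ZA * XB + XA * ZB) := by
    rw [mul_add, mul_sub, h.commute_XA_ZB.eq, mul_one, mul_one]
    abel
  calc
    _ ≤ √s / c * √ε + √ε / (c * √s) := split ▸ norm_add_le_of_le
      (h.norm_ZA_sub_ZB_apply_le hc hs hdefect) (h.norm_cross_apply_le hc hs hdefect)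
    _ = _ := by field_simp; rw [Real.sq_sqrt hs.le]

theorem norm_XA_ZA_sub_ZB_apply_le : ‖XA ((ZA - ZB) ψ)‖ ≤ √s / c * √ε :=
  (norm_apply_eq_of_isSelfAdjoint_of_sq_eq_one h.isSelfAdjoint_XA h.XA_sq _).trans_le
    (h.norm_ZA_sub_ZB_apply_le hc hs hdefect)

theorem norm_ZA_mul_XA_add_XA_mul_ZA_apply_le :
    ‖(ZA * XA + XA * ZA) ψ‖ ≤ (1 + c + s) / (c * √s) * √ε := by
  have split : ZA * XA + XA * ZA =
      ZA * (XA - XB) + XA * (ZA - ZB) + (ZA * XB + XA * ZB) := by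
    rw [mul_sub, mul_sub]
    abel
  have hZ : ‖ZA ((XA - XB) ψ)‖ ≤ √ε / √s :=
    (norm_apply_eq_of_isSelfAdjoint_of_sq_eq_one h.isSelfAdjoint_ZA h.ZA_sq _).trans_le
      (h.norm_XA_sub_XB_apply_le hs hdefect)
  calc
    _ ≤ √ε / √s + √s / c * √ε + √ε / (c * √s) := split ▸ norm_add_le_of_le
      (norm_add_le_of_le hZ (h.norm_XA_ZA_sub_ZB_apply_le hc hs hdefect))
      (h.norm_cross_apply_le hc hs hdefect)
    _ = _ := by field_simp; rw [Real.sq_sqrt hs.le]; ring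

theorem norm_XA_mul_ZA_add_XB_mul_ZB_apply_le :
    ‖(XA * ZA + XB * ZB) ψ‖ ≤ (s + 1) / (c * √s) * √ε := by
  have split : XA * ZA + XB * ZB = ZB * (XA - XB) + XA * (ZA - ZB) := by
    rw [mul_sub, mul_sub, h.XB_mul_ZB, h.commute_XA_ZB.eq]
    abel
  have hZ : ‖ZB ((XA - XB) ψ)‖ ≤ √ε / √s / c := by
    grw [h.norm_ZB_apply_le hc, h.norm_XA_sub_XB_apply_le hs hdefect]
  calc
    _ ≤ √ε / √s / c + √s / c * √ε := split ▸ norm_add_le_of_le hZ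
      (h.norm_XA_ZA_sub_ZB_apply_le hc hs hdefect)
    _ = _ := by field_simp; rw [Real.sq_sqrt hs.le]; ring

end NearMaximalCorrelation

end IsWeightedCHSHTuple

end HilbertSpace

section Matrix

theorem kronecker_sub {l m n p R : Type*} [NonUnitalNonAssocRing R] (A : Matrix l m R)
    (B₁ B₂ : Matrix n p R) : A ⊗ₖ (B₁ - B₂) = A ⊗ₖ B₁ - A ⊗ₖ B₂ := by
  ext ⟨i, i'⟩ ⟨j, j'⟩
  simp only [kronecker_apply, Matrix.sub_apply, mul_sub]

variable {m n : Type*} [Fintype m] [Fintype n] [DecidableEq m] [DecidableEq n]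

theorem isCHSHTuple_kronecker {R : Type*} [CommRing R] [StarRing R]
    {M₁ M₂ : Matrix m m R} {N₁ N₂ : Matrix n n R}
    (hM₁ : M₁.IsHermitian) (hM₁sq : M₁ * M₁ = 1) (hM₂ : M₂.IsHermitian) (hM₂sq : M₂ * M₂ = 1)
    (hN₁ : N₁.IsHermitian) (hN₁sq : N₁ * N₁ = 1) (hN₂ : N₂.IsHermitian) (hN₂sq : N₂ * N₂ = 1) :
    IsCHSHTuple (M₁ ⊗ₖ (1 : Matrix n n R)) (M₂ ⊗ₖ (1 : Matrix n n R))
      ((1 : Matrix m m R) ⊗ₖ N₁) ((1 : Matrix m m R) ⊗ₖ N₂) := by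
  constructor <;>
    simp only [pow_two, star_eq_conjTranspose, conjTranspose_kronecker, conjTranspose_one,
      ← mul_kronecker_mul, mul_one, one_mul, one_kronecker_one,
      hM₁.eq, hM₂.eq, hN₁.eq, hN₂.eq, hM₁sq, hM₂sq, hN₁sq, hN₂sq]

theorem weightedCHSH_kronecker {R : Type*} [CommRing R] (α : R) (M₁ M₂ : Matrix m m R)
    (N₁ N₂ : Matrix n n R) :
    weightedCHSH α (M₁ ⊗ₖ (1 : Matrix n n R)) (M₂ ⊗ₖ (1 : Matrix n n R))
      ((1 : Matrix m m R) ⊗ₖ N₁) ((1 : Matrix m m R) ⊗ₖ N₂) =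
      α • (M₁ ⊗ₖ N₁) + α • (M₁ ⊗ₖ N₂) + M₂ ⊗ₖ N₁ - M₂ ⊗ₖ N₂ := by
  simp only [weightedCHSH, ← mul_kronecker_mul, mul_one, one_mul]

theorem mApply_eq_toEuclideanCLM (A : Matrix n n ℂ) (v : EuclideanSpace ℂ n) :
    mApply A v = toEuclideanCLM (n := n) (𝕜 := ℂ) A v :=
  rfl

end Matrix

theorem stmt_15_general {𝕜 H : Type*} [RCLike 𝕜] [NormedAddCommGroup H] [InnerProductSpace 𝕜 H]
    [CompleteSpace H] (μ : ℝ) (hμ : μ ∈ Set.Ioo 0 (Real.pi / 2))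
    (c s α : ℝ) (hc : c = Real.cos μ) (hs : s = Real.sin μ) (hα : α = c / s) (ε : ℝ)
    (ZA XA N₁ N₂ : H →L[𝕜] H) (hchsh : IsCHSHTuple ZA XA N₁ N₂) (ψ : H)
    (hviol : 2 * √(1 + α ^ 2) * ‖ψ‖ ^ 2 - ε ≤
      RCLike.re (inner 𝕜 ψ (weightedCHSH (α : 𝕜) ZA XA N₁ N₂ ψ)))
    (ZB XB : H →L[𝕜] H) (hZB : ZB = (2 * c : 𝕜)⁻¹ • (N₁ + N₂))
    (hXB : XB = (2 * s : 𝕜)⁻¹ • (N₁ - N₂)) :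
    ‖(ZA - ZB) ψ‖ ≤ √s / c * √ε ∧
    ‖(XA - XB) ψ‖ ≤ √ε / √s ∧
    ‖(ZA * XB + XA * ZB) ψ‖ ≤ √ε / (c * √s) ∧
    ‖(XA * (1 + ZB) - XB * (1 - ZA)) ψ‖ ≤ (c + 1) / (c * √s) * √ε ∧
    ‖(ZA * (1 + XB) - ZB * (1 - XA)) ψ‖ ≤ (s + 1) / (c * √s) * √ε ∧
    ‖(ZA * XA + XA * ZA) ψ‖ ≤ (1 + c + s) / (c * √s) * √ε ∧
    ‖(XA * ZA + XB * ZB) ψ‖ ≤ (2 * s ^ 2 + c * s + c + s) / (c * s * √s) * √ε := by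
  have hc₀ : 0 < c := hc ▸ Real.cos_pos_of_mem_Ioo ⟨by linarith [hμ.1, Real.pi_pos], hμ.2⟩
  have hs₀ : 0 < s := hs ▸ Real.sin_pos_of_mem_Ioo ⟨hμ.1, by linarith [hμ.2, Real.pi_pos]⟩
  have hcs : c ^ 2 + s ^ 2 = 1 := by rw [hc, hs, Real.cos_sq_add_sin_sq]
  have htuple : IsWeightedCHSHTuple (c : 𝕜) (s : 𝕜) ZA XA ZB XB := by
    rw [hZB, hXB]
    exact isWeightedCHSHTuple_of_isCHSHTuple (RCLike.conj_ofReal c) (RCLike.conj_ofReal s)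
      (RCLike.ofReal_ne_zero.2 hc₀.ne') (RCLike.ofReal_ne_zero.2 hs₀.ne')
      (by exact_mod_cast congrArg (RCLike.ofReal (K := 𝕜)) hcs) hchsh
  have hdefect : RCLike.re (inner 𝕜 ψ
      (((2 : 𝕜) • (1 - weightedCorrelation (c : 𝕜) (s : 𝕜) ZA XA ZB XB)) ψ)) ≤ s * ε := by
    rw [hα, RCLike.ofReal_div] at hviol
    rw [hZB, hXB]
    exact re_inner_two_smul_one_sub_weightedCorrelation_le hc₀ hs₀ hcs hviol
  refine ⟨htuple.norm_ZA_sub_ZB_apply_le hc₀ hs₀ hdefect,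
    htuple.norm_XA_sub_XB_apply_le hs₀ hdefect,
    htuple.norm_cross_apply_le hc₀ hs₀ hdefect,
    htuple.norm_XA_mul_one_add_ZB_sub_apply_le hc₀ hs₀ hdefect,
    htuple.norm_ZA_mul_one_add_XB_sub_apply_le hc₀ hs₀ hdefect,
    htuple.norm_ZA_mul_XA_add_XA_mul_ZA_apply_le hc₀ hs₀ hdefect,
    (htuple.norm_XA_mul_ZA_add_XB_mul_ZB_apply_le hc₀ hs₀ hdefect).trans ?_⟩
  gcongr ?_ * _
  rw [div_le_div_iff₀ (by positivity) (by positivity)]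
  have hconst : (s + 1) * s ≤ 2 * s ^ 2 + c * s + c + s := by nlinarith
  linear_combination c * √s * hconst

/-- Consequences of near-maximal violation of the weighted CHSH
inequality.  `H_A = ℂ^{nA}`, `H_B = ℂ^{nB}`, `H_A ⊗ H_B` is
`EuclideanSpace ℂ (Fin nA × Fin nB)`, and operator tensor products are Kronecker products. -/
theorem stmt_15 (μ : ℝ) (hμ : μ ∈ Set.Ioo 0 (Real.pi / 2))
    (c s α : ℝ) (hc : c = Real.cos μ) (hs : s = Real.sin μ) (hα : α = c / s)
    (ε : ℝ) (hε : 0 ≤ ε)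
    (nA nB : ℕ)
    (M₁ M₂ : Matrix (Fin nA) (Fin nA) ℂ)
    (hM₁ : M₁.IsHermitian) (hM₁sq : M₁ * M₁ = 1)
    (hM₂ : M₂.IsHermitian) (hM₂sq : M₂ * M₂ = 1)
    (N₁ N₂ : Matrix (Fin nB) (Fin nB) ℂ)
    (hN₁ : N₁.IsHermitian) (hN₁sq : N₁ * N₁ = 1)
    (hN₂ : N₂.IsHermitian) (hN₂sq : N₂ * N₂ = 1)
    (ψ : EuclideanSpace ℂ (Fin nA × Fin nB)) (hψ : ‖ψ‖ = 1)
    (hviol : 2 * Real.sqrt (1 + α ^ 2) - ε ≤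
      (inner ℂ ψ (mApply ((α : ℂ) • (M₁ ⊗ₖ N₁) + (α : ℂ) • (M₁ ⊗ₖ N₂) +
        M₂ ⊗ₖ N₁ - M₂ ⊗ₖ N₂) ψ) : ℂ).re)
    (ZA XA ZB XB : Matrix (Fin nA × Fin nB) (Fin nA × Fin nB) ℂ)
    (hZA : ZA = M₁ ⊗ₖ (1 : Matrix (Fin nB) (Fin nB) ℂ))
    (hXA : XA = M₂ ⊗ₖ (1 : Matrix (Fin nB) (Fin nB) ℂ))
    (hZB : ZB = ((2 * c : ℝ) : ℂ)⁻¹ • ((1 : Matrix (Fin nA) (Fin nA) ℂ) ⊗ₖ (N₁ + N₂)))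
    (hXB : XB = ((2 * s : ℝ) : ℂ)⁻¹ • ((1 : Matrix (Fin nA) (Fin nA) ℂ) ⊗ₖ (N₁ - N₂))) :
    ‖mApply (ZA - ZB) ψ‖ ≤ Real.sqrt s / c * Real.sqrt ε ∧
    ‖mApply (XA - XB) ψ‖ ≤ Real.sqrt ε / Real.sqrt s ∧
    ‖mApply (ZA * XB + XA * ZB) ψ‖ ≤ Real.sqrt ε / (c * Real.sqrt s) ∧
    ‖mApply (XA * (1 + ZB) - XB * (1 - ZA)) ψ‖ ≤ (c + 1) / (c * Real.sqrt s) * Real.sqrt ε ∧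
    ‖mApply (ZA * (1 + XB) - ZB * (1 - XA)) ψ‖ ≤ (s + 1) / (c * Real.sqrt s) * Real.sqrt ε ∧
    ‖mApply (ZA * XA + XA * ZA) ψ‖ ≤ (1 + c + s) / (c * Real.sqrt s) * Real.sqrt ε ∧
    ‖mApply (XA * ZA + XB * ZB) ψ‖ ≤
      (2 * s ^ 2 + c * s + c + s) / (c * s * Real.sqrt s) * Real.sqrt ε := by
  subst hZA hXA
  have key := stmt_15_general μ hμ c s α hc hs hα ε _ _ _ _
    (isCHSHTuple_map (toEuclideanCLM (𝕜 := ℂ))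
      (isCHSHTuple_kronecker hM₁ hM₁sq hM₂ hM₂sq hN₁ hN₁sq hN₂ hN₂sq)) ψ
    (by rwa [hψ, one_pow, mul_one, ← map_weightedCHSH, weightedCHSH_kronecker])
    (toEuclideanCLM (𝕜 := ℂ) ZB) (toEuclideanCLM (𝕜 := ℂ) XB)
    (by simp [hZB, kronecker_add]) (by simp [hXB, kronecker_sub])
  simpa only [mApply_eq_toEuclideanCLM, map_add, map_sub, map_mul, map_one] using key
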